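/- Let G be a 2-tree. For every nonempty proper subset S of V(G), the graph G − S has at most |S| connected components if and only if G is 3-pyramid free. -/

import Mathlib

/-!
Write `codeg(e)` for the number of common neighbours of the ends of an edge `e`. Both directions
rest on the fact that a 2-tree is 3-pyramid free exactly when every edge has `codeg ≤ 2`.

* If `uv` is an edge of a 2-tree, its common neighbours lie in pairwise different components of
  `G - {u, v}` (`IsTwoTree.exists_coloring`, which produces a labelling that is constant on
  components and the identity on the common neighbours). Hence a 3-pyramid makes `S = {u, v}`
  violate the bound. It also shows that common neighbours are pairwise nonadjacent, so that three
  of them together with `u, v` do induce a 3-pyramid.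
* Every 2-tree satisfies `c(G - S) + ∑_{e ∈ E(G[S])} (2 - codeg e) ≤ |S|` for nonempty `S`
  (`IsTwoTree.exists_weight`). This follows by induction along the construction: a new vertex `z`
  on the edge `uv` gives weight `1` to the edges `zu`, `zv` and lowers the weight of `uv` by `1`,
  which balances the change of `c(G - S)` and of `|S|` in each position of `z, u, v` relative
  to `S`. When all `codeg` are at most `2` the weights are nonnegative and the bound follows.
-/

open SimpleGraph

/-- `IsTwoTree V G` : the simple graph `G` on `ℕ` with support (vertex set) `V` is a 2-tree,
defined inductively: a single edge is a 2-tree, and adding a new vertex `z` adjacent to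
exactly the two endpoints `u, v` of an existing edge yields a 2-tree. -/
inductive IsTwoTree : Finset ℕ → SimpleGraph ℕ → Prop
  | base (u v : ℕ) (huv : u ≠ v) :
      IsTwoTree {u, v} (fromEdgeSet {s(u, v)})
  | grow {V : Finset ℕ} {G : SimpleGraph ℕ} (hG : IsTwoTree V G)
      (u v z : ℕ) (huv : G.Adj u v) (hz : z ∉ V) (hzu : z ≠ u) (hzv : z ≠ v) :
      IsTwoTree (insert z V) (G ⊔ fromEdgeSet {s(z, u), s(z, v)})


/-- `H` (with vertex set `W`) is an `n`-pyramid: a 2-tree on `n + 2` vertices having an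
edge `uv` such that `u` and `v` have exactly `n` common neighbors. -/
def IsNPyramid (n : ℕ) (W : Finset ℕ) (H : SimpleGraph ℕ) : Prop :=
  IsTwoTree W H ∧ W.card = n + 2 ∧
    ∃ u v, H.Adj u v ∧ (H.neighborSet u ∩ H.neighborSet v).ncard = n

/-- `G` (with vertex set `V`) contains an `n`-pyramid as an induced subgraph: there is a
set of vertices `W ⊆ V` on which `G` induces an `n`-pyramid. -/
def ContainsNPyramid (V : Finset ℕ) (G : SimpleGraph ℕ) (n : ℕ) : Prop :=
  ∃ (W : Finset ℕ) (H : SimpleGraph ℕ), W ⊆ V ∧ IsNPyramid n W H ∧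
    ∀ a b, a ∈ W → b ∈ W → (G.Adj a b ↔ H.Adj a b)

theorem IsTwoTree.mem_of_adj {V : Finset ℕ} {G : SimpleGraph ℕ} (hG : IsTwoTree V G) :
    ∀ {a b : ℕ}, G.Adj a b → a ∈ V ∧ b ∈ V := by
  induction hG with
  | base u v huv =>
    intro a b h
    simp at h
    grind
  | grow hG u v z huv hz hzu hzv ih =>
    intro a b h
    have := ih huv
    simp at h
    grind

theorem IsTwoTree.finite_common {V : Finset ℕ} {G : SimpleGraph ℕ} (hG : IsTwoTree V G)
    (a b : ℕ) : (G.neighborSet a ∩ G.neighborSet b).Finite :=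
  V.finite_toSet.subset fun _ hx => (hG.mem_of_adj hx.1).2

/-- For an edge `uv` there is a labelling of the vertices that is constant along the edges of
`G - {u, v}` and separates the common neighbours of `u` and `v`. -/
theorem IsTwoTree.exists_coloring {V : Finset ℕ} {G : SimpleGraph ℕ} (hG : IsTwoTree V G) :
    ∀ u v, G.Adj u v → ∃ f : ℕ → ℕ, (∀ a, G.Adj u a → G.Adj v a → f a = a) ∧
      ∀ x y, G.Adj x y → x ≠ u → x ≠ v → y ≠ u → y ≠ v → f x = f y := by
  induction hG with
  | base p q hpq =>
    intro u v h
    refine ⟨id, fun _ _ _ => rfl, ?_⟩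
    intro x y hxy
    simp at h hxy
    grind
  | @grow V G hG p q z hpq hz hzp hzq ih =>
    intro u v h
    have hzl : ∀ x, ¬ G.Adj z x := fun x hx => hz (hG.mem_of_adj hx).1
    have hzr : ∀ x, ¬ G.Adj x z := fun x hx => hz (hG.mem_of_adj hx).2
    by_cases hu : u = z ∨ v = z
    · -- the edge is `zp` or `zq`, and its only common neighbour is the other of `p, q`
      refine ⟨fun _ => if u = p ∨ v = p then q else p, ?_, fun _ _ _ _ _ _ _ => rfl⟩
      intro a ha hb
      have hne := h.ne
      have hne1 := ha.ne
      have hne2 := hb.ne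
      simp at h ha hb
      grind
    · push Not at hu
      have hold : G.Adj u v := by
        simp at h
        grind
      obtain ⟨f, hf1, hf2⟩ := ih u v hold
      have hne := hpq.ne
      refine ⟨fun x => if x = z then
        (if p ≠ u ∧ p ≠ v then f p else if q ≠ u ∧ q ≠ v then f q else z) else f x, ?_, ?_⟩
      · intro a ha hb
        have hne := hold.ne
        simp at ha hb
        grind
      · intro x y hxy h1 h2 h3 h4
        have hfpq := hf2 p q hpq
        have hf := hf2 x y
        simp at hxy
        grind

/-- The weighted inequality `c(G - S) + ∑_{e ∈ E(G[S])} w e ≤ max |S| 1` for a weight `w` that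
vanishes off the edges and satisfies `2 - codeg e ≤ w e` on them. The number of components
is bounded through a set `R` of representatives, reaching every vertex of `G - S` by a path
avoiding `S`; the maximum with `1` lets the induction pass through `S = ∅`. -/
theorem IsTwoTree.exists_weight {V : Finset ℕ} {G : SimpleGraph ℕ} (hG : IsTwoTree V G) :
    ∃ w : Sym2 ℕ → ℤ, (∀ a b, ¬ G.Adj a b → w s(a, b) = 0) ∧
      (∀ a b, G.Adj a b → 2 - ((G.neighborSet a ∩ G.neighborSet b).ncard : ℤ) ≤ w s(a, b)) ∧
      ∀ S : Finset ℕ, ∃ R : Finset ℕ, (∀ r ∈ R, r ∈ V ∧ r ∉ S) ∧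
        (∀ x ∈ V, x ∉ S → ∃ r ∈ R, Relation.ReflTransGen (fun a b => G.Adj a b ∧ b ∉ S) r x) ∧
        (R.card : ℤ) + ∑ e ∈ S.sym2, w e ≤ max (S.card : ℤ) 1 := by
  induction hG with
  | base u v huv =>
    refine ⟨fun e => if e = s(u, v) then 2 else 0, ?_, ?_, ?_⟩
    · intro a b h
      simp at h
      grind
    · intro a b h
      simp at h
      grind
    · intro S
      have hadj : (fromEdgeSet {s(u, v)}).Adj u v := by simpa using huv
      simp only [Finset.sum_ite_eq', Finset.mk_mem_sym2_iff]
      by_cases hu : u ∈ S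
      · by_cases hv : v ∈ S
        · refine ⟨∅, by simp, by grind, ?_⟩
          have : ({u, v} : Finset ℕ).card ≤ S.card := Finset.card_le_card (by grind)
          rw [Finset.card_pair huv] at this
          simp [hu, hv]
          omega
        · refine ⟨{v}, by simp [hv], ?_, by simp [hv]⟩
          intro x hx hxS
          have : x = v := by grind
          exact ⟨v, by simp, this ▸ .refl⟩
      · refine ⟨{u}, by simp [hu], ?_, by simp [hu]⟩
        intro x hx hxS
        refine ⟨u, by simp, ?_⟩
        obtain rfl | rfl : x = u ∨ x = v := by simpa using hx
        · exact .refl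
        · exact .single ⟨hadj, hxS⟩
  | @grow V G hG u v z huv hz hzu hzv ih =>
    obtain ⟨w, hw0, hw, hS⟩ := ih
    have hzl : ∀ x, ¬ G.Adj z x := fun x hx => hz (hG.mem_of_adj hx).1
    have hzr : ∀ x, ¬ G.Adj x z := fun x hx => hz (hG.mem_of_adj hx).2
    have hG' := hG.grow u v z huv hz hzu hzv
    have hne := huv.ne
    set G' := G ⊔ fromEdgeSet {s(z, u), s(z, v)} with hdef
    have hle : G ≤ G' := le_sup_left
    have hadj : ∀ x y, G'.Adj x y ↔ G.Adj x y ∨ (x = z ∧ (y = u ∨ y = v)) ∨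
        (y = z ∧ (x = u ∨ x = v)) := by
      intro x y
      simp [hdef]
      grind
    clear_value G'
    refine ⟨fun e => w e + (if e = s(z, u) then 1 else 0) + (if e = s(z, v) then 1 else 0)
      - (if e = s(u, v) then 1 else 0), ?_, ?_, ?_⟩
    · intro a b h
      rw [hadj] at h
      have := hw0 a b
      have := huv.symm
      simp only [Sym2.eq_iff]
      grind
    · intro a b h
      have hfin := hG'.finite_common a b
      by_cases hab : G.Adj a b
      · have haz : a ≠ z := by grind
        have hbz : b ≠ z := by grind
        have hwab := hw a b hab
        have hsub : G.neighborSet a ∩ G.neighborSet b ⊆ G'.neighborSet a ∩ G'.neighborSet b :=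
          fun x hx => ⟨hle hx.1, hle hx.2⟩
        by_cases he : s(a, b) = s(u, v)
        · -- `uv` loses `1` in weight and gains the common neighbour `z`
          have hins : insert z (G.neighborSet a ∩ G.neighborSet b) ⊆
              G'.neighborSet a ∩ G'.neighborSet b := by
            refine Set.insert_subset ?_ hsub
            simp only [Set.mem_inter_iff, mem_neighborSet, hadj]
            rcases Sym2.eq_iff.1 he with ⟨rfl, rfl⟩ | ⟨rfl, rfl⟩ <;> simp
          have hc := Set.ncard_le_ncard hins hfin
          rw [Set.ncard_insert_of_notMem (by simp [hzr]) (hG.finite_common a b)] at hc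
          have h1 : s(a, b) ≠ s(z, u) := by grind
          have h2 : s(a, b) ≠ s(z, v) := by grind
          simp only [if_neg h1, if_neg h2, if_pos he]
          omega
        · have hc := Set.ncard_le_ncard hsub hfin
          have h1 : s(a, b) ≠ s(z, u) := by grind
          have h2 : s(a, b) ≠ s(z, v) := by grind
          simp only [if_neg h1, if_neg h2, if_neg he]
          omega
      · -- a new edge `zu` or `zv` has weight `1`, and lies in the triangle `zuv`
        have hpos : 1 ≤ (G'.neighborSet a ∩ G'.neighborSet b).ncard := by
          rw [Nat.one_le_iff_ne_zero, ← Nat.pos_iff_ne_zero, Set.ncard_pos hfin]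
          have := huv.symm
          refine ⟨if a = u ∨ b = u then v else u, ?_⟩
          simp only [Set.mem_inter_iff, mem_neighborSet, hadj] at h ⊢
          grind
        have hw1 := hw0 a b hab
        have h3 : s(a, b) ≠ s(u, v) := by
          have := huv.symm
          grind
        have h12 : s(a, b) = s(z, u) ∨ s(a, b) = s(z, v) := by
          rw [hadj] at h
          grind
        simp only [if_neg h3, hw1]
        split_ifs <;> grind
    · intro S
      have hmono : ∀ S₁ : Finset ℕ, (∀ x ∈ V, x ∉ S₁ → x ∉ S) → ∀ r x,
          Relation.ReflTransGen (fun a b => G.Adj a b ∧ b ∉ S₁) r x →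
          Relation.ReflTransGen (fun a b => G'.Adj a b ∧ b ∉ S) r x := by
        intro S₁ h1 r x h
        exact h.lift id fun a b h => ⟨hle h.1, h1 b (hG.mem_of_adj h.1).2 h.2⟩
      have hsum : ∑ e ∈ (S.erase z).sym2, w e = ∑ e ∈ S.sym2, w e := by
        refine Finset.sum_subset (Finset.sym2_mono (Finset.erase_subset _ _)) ?_
        intro e he he'
        induction e with | _ a b =>
        simp only [Finset.mk_mem_sym2_iff] at he he'
        refine hw0 a b ?_
        grind
      simp only [Finset.sum_sub_distrib, Finset.sum_add_distrib, Finset.sum_ite_eq',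
        Finset.mk_mem_sym2_iff]
      rw [← hsum]
      obtain ⟨R, hR1, hR2, hR3⟩ := hS (S.erase z)
      by_cases hzS : z ∈ S
      · -- `G' - S` is `G - (S.erase z)`, so the old representatives still serve
        refine ⟨R, by grind, ?_, ?_⟩
        · intro x hx hxS
          obtain ⟨r, hr, hrx⟩ := hR2 x (by grind) (by grind)
          exact ⟨r, hr, hmono _ (by grind) _ _ hrx⟩
        · have hcard := Finset.card_erase_add_one hzS
          -- the sum grows only if `u` or `v` is in `S`; if neither is, `S.erase z` may be empty
          have hpos : u ∈ S ∨ v ∈ S → 1 ≤ (S.erase z).card := by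
            intro h
            rw [Nat.one_le_iff_ne_zero, Finset.card_ne_zero]
            rcases h with h | h
            · exact ⟨u, by grind⟩
            · exact ⟨v, by grind⟩
          grind
      · rw [Finset.erase_eq_of_notMem hzS] at *
        have hold : ∀ x ∈ V, x ∉ S → ∃ r ∈ R,
            Relation.ReflTransGen (fun a b => G'.Adj a b ∧ b ∉ S) r x := by
          intro x hx hxS
          obtain ⟨r, hr, hrx⟩ := hR2 x hx hxS
          exact ⟨r, hr, hmono _ (by grind) _ _ hrx⟩
        have hmem := hG.mem_of_adj huv
        by_cases huvS : u ∈ S ∧ v ∈ S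
        · -- `z` is isolated in `G' - S`: one more component, and `uv` loses `1` in weight
          have hzR : z ∉ R := fun h => hz (hR1 z h).1
          refine ⟨insert z R, by grind, ?_, ?_⟩
          · intro x hx hxS
            rcases Finset.mem_insert.1 hx with rfl | hx
            · exact ⟨x, by simp, .refl⟩
            · obtain ⟨r, hr, hrx⟩ := hold x hx hxS
              exact ⟨r, by simp [hr], hrx⟩
          · rw [Finset.card_insert_of_notMem hzR]
            simp [hzS, huvS]
            grind
        · -- `z` joins the component of whichever of `u, v` survives
          refine ⟨R, by grind, ?_, ?_⟩
          · intro x hx hxS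
            rcases Finset.mem_insert.1 hx with rfl | hx
            · obtain ⟨y, hy, hyS, hyx⟩ : ∃ y ∈ V, y ∉ S ∧ G'.Adj y x := by
                simp only [hadj]
                grind
              obtain ⟨r, hr, hry⟩ := hold y hy hyS
              exact ⟨r, hr, hry.tail ⟨hyx, hxS⟩⟩
            · exact hold x hx hxS
          · simp [hzS, huvS]
            grind

/-- Three common neighbours of an edge, together with the edge, induce a 3-pyramid. -/
theorem IsTwoTree.containsNPyramid_three {V : Finset ℕ} {G : SimpleGraph ℕ} (hG : IsTwoTree V G)
    {u v a b c : ℕ} (huv : G.Adj u v) (hab : a ≠ b) (hac : a ≠ c) (hbc : b ≠ c)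
    (hua : G.Adj u a) (hva : G.Adj v a) (hub : G.Adj u b) (hvb : G.Adj v b)
    (huc : G.Adj u c) (hvc : G.Adj v c) : ContainsNPyramid V G 3 := by
  obtain ⟨f, hf1, hf2⟩ := hG.exists_coloring u v huv
  have key : ∀ x y, G.Adj u x → G.Adj v x → G.Adj u y → G.Adj v y → ¬ G.Adj x y := by
    intro x y h1 h2 h3 h4 h
    have := hf2 x y h h1.ne' h2.ne' h3.ne' h4.ne'
    rw [hf1 x h1 h2, hf1 y h3 h4] at this
    exact h.ne this
  have n1 := huv.ne
  have n2 := hua.ne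
  have n3 := hva.ne
  have n4 := hub.ne
  have n5 := hvb.ne
  have n6 := huc.ne
  have n7 := hvc.ne
  have kab := key a b hua hva hub hvb
  have kac := key a c hua hva huc hvc
  have kbc := key b c hub hvb huc hvc
  let H : SimpleGraph ℕ := fromEdgeSet {s(u, v)} ⊔ fromEdgeSet {s(a, u), s(a, v)} ⊔
    fromEdgeSet {s(b, u), s(b, v)} ⊔ fromEdgeSet {s(c, u), s(c, v)}
  have hadj : ∀ x y, H.Adj x y ↔ x ≠ y ∧ ((x = u ∨ x = v) ∧ (y = u ∨ y = v ∨ y = a ∨ y = b ∨ y = c)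
      ∨ (y = u ∨ y = v) ∧ (x = u ∨ x = v ∨ x = a ∨ x = b ∨ x = c)) := by
    intro x y
    simp [H]
    grind
  have hT : IsTwoTree (insert c (insert b (insert a {u, v}))) H := by
    refine .grow (.grow (.grow (.base u v n1) u v a ?_ ?_ ?_ ?_) u v b ?_ ?_ ?_ ?_)
      u v c ?_ ?_ ?_ ?_
    all_goals simp; grind
  clear_value H
  refine ⟨_, H, ?_, ⟨hT, ?_, u, v, ?_, ?_⟩, ?_⟩
  · have := hG.mem_of_adj hua
    have := hG.mem_of_adj hvb
    have := hG.mem_of_adj huc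
    simp [Finset.insert_subset_iff, *]
  · grind
  · rw [hadj]; grind
  · rw [Set.ncard_eq_three]
    refine ⟨a, b, c, hab, hac, hbc, ?_⟩
    ext x
    simp only [Set.mem_inter_iff, mem_neighborSet, hadj, Set.mem_insert_iff,
      Set.mem_singleton_iff]
    grind
  · intro x y hx hy
    rw [hadj]
    simp only [Finset.mem_insert, Finset.mem_singleton] at hx hy
    constructor
    · intro h
      have hs := h.symm
      have := h.ne
      grind
    · have := huv.symm
      have := hua.symm
      have := hva.symm
      have := hub.symm
      have := hvb.symm
      have := huc.symm
      have := hvc.symm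
      grind

/-- An edge with three common neighbours leaves at least three components when deleted. -/
theorem IsTwoTree.three_le_card {V : Finset ℕ} {G : SimpleGraph ℕ} (hG : IsTwoTree V G)
    {u v a b c : ℕ} (huv : G.Adj u v) (hab : a ≠ b) (hac : a ≠ c) (hbc : b ≠ c)
    (hua : G.Adj u a) (hva : G.Adj v a) (hub : G.Adj u b) (hvb : G.Adj v b)
    (huc : G.Adj u c) (hvc : G.Adj v c) :
    3 ≤ Nat.card
      ((G.induce ((V : Set ℕ) \ (({u, v} : Finset ℕ) : Set ℕ))).ConnectedComponent) := by
  obtain ⟨f, hf1, hf2⟩ := hG.exists_coloring u v huv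
  set T : Set ℕ := (V : Set ℕ) \ (({u, v} : Finset ℕ) : Set ℕ) with hT
  have : Finite T := (V.finite_toSet.subset Set.sdiff_subset).to_subtype
  have hT' : ∀ x, G.Adj u x → G.Adj v x → x ∈ T := by
    intro x h1 h2
    have := (hG.mem_of_adj h1).2
    have := h1.ne
    have := h2.ne
    simp [hT]
    grind
  have hwalk : ∀ x y : T, (G.induce T).Reachable x y → f x = f y := by
    rintro x y ⟨p⟩
    induction p with
    | nil => rfl
    | @cons x y _ h _ ih =>
      have hx := x.2
      have hy := y.2
      simp only [hT, Finset.coe_pair, Set.mem_sdiff, Set.mem_insert_iff,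
        Set.mem_singleton_iff, not_or] at hx hy
      exact (hf2 x y h hx.2.1 hx.2.2 hy.2.1 hy.2.2).trans ih
  let g : ({a, b, c} : Finset ℕ) → (G.induce T).ConnectedComponent := fun x =>
    (G.induce T).connectedComponentMk ⟨x, by
      obtain ⟨x, hx⟩ := x
      simp only [Finset.mem_insert, Finset.mem_singleton] at hx
      apply hT' <;> grind⟩
  have hg : Function.Injective g := by
    rintro ⟨x, hx⟩ ⟨y, hy⟩ h
    have := hwalk _ _ (ConnectedComponent.eq.1 h)
    simp only [Finset.mem_insert, Finset.mem_singleton] at hx hy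
    have h1 := hf1 a hua hva
    have h2 := hf1 b hub hvb
    have h3 := hf1 c huc hvc
    grind
  have h3 := Nat.card_le_card_of_injective g hg
  rwa [Nat.card_eq_fintype_card, Fintype.card_coe,
    Finset.card_eq_three.2 ⟨a, b, c, hab, hac, hbc, rfl⟩] at h3

/-- For a 2-tree `G`: every nonempty proper subset `S` of the vertex set leaves at most
`|S|` connected components upon deletion if and only if `G` is 3-pyramid free. -/
theorem chvatal_condition_iff_three_pyramid_free
    (V : Finset ℕ) (G : SimpleGraph ℕ) (hG : IsTwoTree V G) :
    (∀ S : Finset ℕ, S.Nonempty → S ⊂ V →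
        Nat.card ((G.induce ((V : Set ℕ) \ (S : Set ℕ))).ConnectedComponent) ≤ S.card)
      ↔ ¬ ContainsNPyramid V G 3 := by
  constructor
  · rintro h ⟨W, H, hWV, ⟨hH, -, u, v, huv, hcard⟩, hGH⟩
    obtain ⟨a, b, c, hab, hac, hbc, habc⟩ := Set.ncard_eq_three.1 hcard
    have hadj : ∀ x y, H.Adj x y → G.Adj x y := fun x y hxy =>
      (hGH x y (hH.mem_of_adj hxy).1 (hH.mem_of_adj hxy).2).2 hxy
    have ha : a ∈ H.neighborSet u ∩ H.neighborSet v := by simp [habc]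
    have hb : b ∈ H.neighborSet u ∩ H.neighborSet v := by simp [habc]
    have hc : c ∈ H.neighborSet u ∩ H.neighborSet v := by simp [habc]
    have h3 := hG.three_le_card (hadj _ _ huv) hab hac hbc (hadj _ _ ha.1) (hadj _ _ ha.2)
      (hadj _ _ hb.1) (hadj _ _ hb.2) (hadj _ _ hc.1) (hadj _ _ hc.2)
    have h2 := h {u, v} (by simp) (by
      have := hG.mem_of_adj (hadj _ _ huv)
      have := hG.mem_of_adj (hadj _ _ ha.1)
      have := ha.1.ne
      have := ha.2.ne
      rw [Finset.ssubset_iff_of_subset (by grind)]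
      exact ⟨a, by grind, by grind⟩)
    rw [Finset.card_pair huv.ne] at h2
    omega
  · intro hfree S hS _
    obtain ⟨w, hw0, hw, hR⟩ := hG.exists_weight
    obtain ⟨R, hR1, hR2, hR3⟩ := hR S
    have hcodeg : ∀ u v, G.Adj u v → (G.neighborSet u ∩ G.neighborSet v).ncard ≤ 2 := by
      intro u v huv
      by_contra! h
      obtain ⟨t, ht, ht3⟩ := Set.exists_subset_card_eq (Nat.succ_le_of_lt h)
      obtain ⟨a, b, c, hab, hac, hbc, rfl⟩ := Set.ncard_eq_three.1 ht3
      have ha := ht (show a ∈ _ by simp)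
      have hb := ht (show b ∈ _ by simp)
      have hc := ht (show c ∈ _ by simp)
      exact hfree (hG.containsNPyramid_three huv hab hac hbc ha.1 ha.2 hb.1 hb.2 hc.1 hc.2)
    have hsum : 0 ≤ ∑ e ∈ S.sym2, w e := by
      refine Finset.sum_nonneg fun e _ => ?_
      induction e with | _ a b =>
      by_cases hab : G.Adj a b
      · have := hw a b hab
        have := hcodeg a b hab
        omega
      · exact (hw0 a b hab).ge
    have hRS : R.card ≤ S.card := by
      have := hS.card_pos
      omega
    refine le_trans ?_ hRS
    set T : Set ℕ := (V : Set ℕ) \ (S : Set ℕ) with hT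
    have hreach : ∀ r x, Relation.ReflTransGen (fun a b => G.Adj a b ∧ b ∉ S) r x →
        ∀ hr : r ∈ T, ∃ hx : x ∈ T, (G.induce T).Reachable ⟨r, hr⟩ ⟨x, hx⟩ := by
      intro r x h hr
      induction h with
      | refl => exact ⟨hr, .refl _⟩
      | @tail y x _ hyx ih =>
        obtain ⟨hy, hry⟩ := ih
        have hx : x ∈ T := ⟨(hG.mem_of_adj hyx.1).2, hyx.2⟩
        have hadj : (G.induce T).Adj ⟨y, hy⟩ ⟨x, hx⟩ := hyx.1
        exact ⟨hx, hry.trans hadj.reachable⟩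
    let g : R → (G.induce T).ConnectedComponent := fun r =>
      (G.induce T).connectedComponentMk ⟨r, hR1 r r.2⟩
    have hg : Function.Surjective g := by
      intro C
      induction C using ConnectedComponent.ind with | _ x =>
      obtain ⟨r, hr, hrx⟩ := hR2 x x.2.1 x.2.2
      obtain ⟨_, h⟩ := hreach r x hrx (hR1 r hr)
      exact ⟨⟨r, hr⟩, ConnectedComponent.eq.2 h⟩
    have hle := Nat.card_le_card_of_surjective g hg
    have hR : Nat.card R = R.card := by rw [Nat.card_eq_fintype_card, Fintype.card_coe]
    exact hle.trans_eq hR
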